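/- Let P ⊂ ℝ^N (N = n(n-1)/2) be a lattice polytope (convex hull of a nonempty finite subset of ℤ^N) that is normally equivalent to the Gelfand–Zetlin polytope Δ_μ of the regular dominant weight μ = (1, 2, ..., n), i.e., for all u, v ∈ ℝ^N: F_P(u) = F_P(v) ⟺ F_{Δ_μ}(u) = F_{Δ_μ}(v). Then there exist a dominant integer weight λ = (λ_1 ≤ ... ≤ λ_n) ∈ ℤ^n and an integer vector c ∈ ℤ^N such that P = c + Δ_λ (pointwise translation). -/

import Mathlib

/-- Index set for Gelfand–Zetlin arrays: pairs `(i, j)` with `1 ≤ i`, `1 ≤ j`,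
`i + j ≤ n` (row `i`, column `j`, so `1 ≤ i ≤ n-1` and `1 ≤ j ≤ n-i`). -/
abbrev GZIdx (n : ℕ) :=
  {p : Fin (n + 1) × Fin (n + 1) // 1 ≤ p.1.val ∧ 1 ≤ p.2.val ∧ p.1.val + p.2.val ≤ n}

/-- Constructor for elements of `GZIdx n`. -/
def gzIdx (n i j : ℕ) (hi : 1 ≤ i) (hj : 1 ≤ j) (hij : i + j ≤ n) : GZIdx n :=
  ⟨(⟨i, by omega⟩, ⟨j, by omega⟩), ⟨hi, hj, hij⟩⟩

/-- The Gelfand–Zetlin polytope `Δ_λ ⊆ ℝ^N` of a weight `λ = (λ_1, …, λ_n)`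
(`lam` is 0-indexed, so `λ_j = lam ⟨j-1⟩`). -/
def gzPolytope (n : ℕ) (lam : Fin n → ℝ) : Set (EuclideanSpace ℝ (GZIdx n)) :=
  {x | (∀ (j : ℕ) (h1 : 1 ≤ j) (h2 : j ≤ n - 1),
          lam ⟨j - 1, by omega⟩ ≤ x (gzIdx n 1 j (by omega) h1 (by omega)) ∧
          x (gzIdx n 1 j (by omega) h1 (by omega)) ≤ lam ⟨j, by omega⟩) ∧
       (∀ (i j : ℕ) (hi : 2 ≤ i) (hj : 1 ≤ j) (hij : i + j ≤ n),
          x (gzIdx n (i - 1) j (by omega) hj (by omega)) ≤ x (gzIdx n i j (by omega) hj hij) ∧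
          x (gzIdx n i j (by omega) hj hij) ≤
            x (gzIdx n (i - 1) (j + 1) (by omega) (by omega) (by omega)))}

/-- The face of a set `P` in direction `u`. -/
def faceIn {ι : Type*} [Fintype ι] (P : Set (EuclideanSpace ℝ ι))
    (u : EuclideanSpace ℝ ι) : Set (EuclideanSpace ℝ ι) :=
  {x | x ∈ P ∧ ∀ y ∈ P, (inner ℝ u y : ℝ) ≤ (inner ℝ u x : ℝ)}


section Abstract
variable {ι : Type*} [Fintype ι]

theorem face_half (P D : Set (EuclideanSpace ℝ ι))
    (hne : ∀ u v, faceIn P u = faceIn P v ↔ faceIn D u = faceIn D v)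
    (u v y : EuclideanSpace ℝ ι) (hu : y ∈ faceIn D u) (hv : y ∈ faceIn D v) :
    faceIn P (u + v) ⊆ faceIn P u := by
  have key : ∀ t : ℝ, 0 < t → faceIn D (u + t • v) = faceIn D u ∩ faceIn D v := by
    intro t ht
    ext x
    constructor
    · rintro ⟨hx, h⟩
      have h1 := h y hu.1
      simp only [inner_add_left, real_inner_smul_left] at h1
      have h2 := hu.2 x hx
      have h3 := hv.2 x hx
      have h4 : inner ℝ u y = inner ℝ u x := by nlinarith
      have h5 : inner ℝ v y = inner ℝ v x := by nlinarith
      exact ⟨⟨hx, fun z hz => h4 ▸ hu.2 z hz⟩, ⟨hx, fun z hz => h5 ▸ hv.2 z hz⟩⟩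
    · rintro ⟨⟨hx, h⟩, ⟨_, h'⟩⟩
      refine ⟨hx, fun z hz => ?_⟩
      simp only [inner_add_left, real_inner_smul_left]
      have := h z hz
      have := h' z hz
      nlinarith
  intro x hx
  refine ⟨hx.1, fun z hz => ?_⟩
  by_contra hlt
  push Not at hlt
  set d := inner ℝ u z - inner ℝ u x with hd
  set e := inner ℝ v x - inner ℝ v z with he
  have hdpos : 0 < d := by linarith
  have hall : ∀ t : ℝ, 0 < t → d ≤ t * e := by
    intro t ht
    have h1 : faceIn P (u + v) = faceIn P (u + t • v) := by
      rw [hne, key t ht]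
      simpa using key 1 one_pos
    rw [h1] at hx
    have := hx.2 z hz
    simp only [inner_add_left, real_inner_smul_left] at this
    rw [hd, he]; linarith
  have he1 : d ≤ e := by simpa using hall 1 one_pos
  have he0 : 0 < e := by linarith
  have := hall (d / (2 * e)) (by positivity)
  have h2 : d / (2 * e) * e = d / 2 := by field_simp
  linarith

theorem face_add (P D : Set (EuclideanSpace ℝ ι))
    (hne : ∀ u v, faceIn P u = faceIn P v ↔ faceIn D u = faceIn D v)
    (u v y : EuclideanSpace ℝ ι) (hu : y ∈ faceIn D u) (hv : y ∈ faceIn D v)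
    (x : EuclideanSpace ℝ ι) (hx : x ∈ faceIn P (u + v)) : x ∈ faceIn P u ∧ x ∈ faceIn P v :=
  ⟨face_half P D hne u v y hu hv hx,
    face_half P D hne v u y hv hu (by rwa [add_comm])⟩

theorem mem_face_add {D : Set (EuclideanSpace ℝ ι)} {u v y : EuclideanSpace ℝ ι}
    (hu : y ∈ faceIn D u) (hv : y ∈ faceIn D v) : y ∈ faceIn D (u + v) := by
  refine ⟨hu.1, fun z hz => ?_⟩
  simp only [inner_add_left]
  exact add_le_add (hu.2 z hz) (hv.2 z hz)

theorem mem_face_sum {κ : Type*} (s : Finset κ) {D : Set (EuclideanSpace ℝ ι)}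
    (a : κ → EuclideanSpace ℝ ι) {y : EuclideanSpace ℝ ι} (hy : y ∈ D)
    (h : ∀ k ∈ s, y ∈ faceIn D (a k)) : y ∈ faceIn D (∑ k ∈ s, a k) := by
  classical
  induction s using Finset.induction_on with
  | empty => exact ⟨hy, by simp⟩
  | insert k s hk ih =>
    rw [Finset.sum_insert hk]
    exact mem_face_add (h k (by simp)) (ih fun k hk => h k (by simp [hk]))

theorem face_sum {κ : Type*} (s : Finset κ) (P D : Set (EuclideanSpace ℝ ι))
    (hne : ∀ u v, faceIn P u = faceIn P v ↔ faceIn D u = faceIn D v)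
    (a : κ → EuclideanSpace ℝ ι) {y : EuclideanSpace ℝ ι} (hy : y ∈ D)
    (h : ∀ k ∈ s, y ∈ faceIn D (a k))
    (x : EuclideanSpace ℝ ι) (hx : x ∈ faceIn P (∑ k ∈ s, a k)) :
    ∀ k ∈ s, x ∈ faceIn P (a k) := by
  classical
  induction s using Finset.induction_on with
  | empty => simp
  | insert k s hk ih =>
    rw [Finset.sum_insert hk] at hx
    have h2 := face_add P D hne _ _ y (h k (by simp))
      (mem_face_sum s a hy fun k hk => h k (by simp [hk])) x hx
    intro k' hk'
    rcases Finset.mem_insert.1 hk' with rfl | h'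
    · exact h2.1
    · exact ih (fun k hk => h k (by simp [hk])) h2.2 k' h'

theorem exists_max_pt (T : Finset (EuclideanSpace ℝ ι)) (hT : T.Nonempty)
    (u : EuclideanSpace ℝ ι) :
    ∃ s ∈ T, s ∈ faceIn (convexHull ℝ (T : Set (EuclideanSpace ℝ ι))) u := by
  obtain ⟨s, hs, hmax⟩ := T.exists_max_image (fun s => inner ℝ u s) hT
  refine ⟨s, hs, subset_convexHull ℝ _ hs, fun y hy => ?_⟩
  have hc : Convex ℝ {y : EuclideanSpace ℝ ι | inner ℝ u y ≤ inner ℝ u s} :=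
    convex_halfSpace_le (innerₗ _ u).isLinear _
  exact convexHull_min (fun z hz => hmax z hz) hc hy

/-- The facet inequalities of `D` with right-hand sides from `P` describe `P`. -/
theorem mem_of_facets {κ : Type*} [Finite κ] (T : Finset (EuclideanSpace ℝ ι)) (hT : T.Nonempty)
    (P D : Set (EuclideanSpace ℝ ι)) (hP : P = convexHull ℝ (T : Set (EuclideanSpace ℝ ι)))
    (hne : ∀ u v, faceIn P u = faceIn P v ↔ faceIn D u = faceIn D v)
    (a : κ → EuclideanSpace ℝ ι) (r : κ → ℝ)
    (hD : ∀ x, x ∈ D ↔ ∀ k, inner ℝ (a k) x ≤ r k)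
    (hDc : IsCompact D) (hDn : D.Nonempty)
    (q : EuclideanSpace ℝ ι) (hq : ∀ k, ∃ x ∈ P, inner ℝ (a k) q ≤ inner ℝ (a k) x) :
    q ∈ P := by
  have hmax : ∀ u, ∃ s ∈ T, s ∈ faceIn P u := by rw [hP]; exact exists_max_pt T hT
  have hTP : ∀ s ∈ T, s ∈ P := by rw [hP]; exact fun s hs => subset_convexHull ℝ _ hs
  have main : ∀ u : EuclideanSpace ℝ ι, ∃ s ∈ T, inner ℝ u q ≤ inner ℝ u s := by
    intro u
    obtain ⟨y, hyD, hy⟩ := hDc.exists_isMaxOn hDn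
      (f := fun x => inner ℝ u x) (by fun_prop)
    let C : ProperCone ℝ (EuclideanSpace ℝ ι) :=
      { carrier := {w | y ∈ faceIn D w ∧ ∃ s ∈ T, inner ℝ w q ≤ inner ℝ w s}
        add_mem' := by
          rintro w w' ⟨h1, s, hs, h2⟩ ⟨h1', s', hs', h2'⟩
          refine ⟨mem_face_add h1 h1', ?_⟩
          obtain ⟨x, hx, hxf⟩ := hmax (w + w')
          obtain ⟨ha, hb⟩ := face_add P D hne w w' y h1 h1' x hxf
          refine ⟨x, hx, ?_⟩
          simp only [inner_add_left]
          have := ha.2 s (hTP s hs)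
          have := hb.2 s' (hTP s' hs')
          linarith
        zero_mem' := by
          obtain ⟨s, hs⟩ := hT
          exact ⟨⟨hyD, by simp⟩, s, hs, by simp⟩
        smul_mem' := by
          rintro ⟨t, ht⟩ w ⟨h1, s, hs, h2⟩
          have e : ∀ z : EuclideanSpace ℝ ι,
              inner ℝ ((⟨t, ht⟩ : {t : ℝ // 0 ≤ t}) • w) z = t * inner ℝ w z := by
            intro z
            exact real_inner_smul_left w z t
          refine ⟨⟨hyD, fun z hz => ?_⟩, s, hs, ?_⟩
          · rw [e, e]; exact mul_le_mul_of_nonneg_left (h1.2 z hz) ht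
          · rw [e, e]; exact mul_le_mul_of_nonneg_left h2 ht
        isClosed' := by
          have e : {w : EuclideanSpace ℝ ι | y ∈ faceIn D w ∧ ∃ s ∈ T, inner ℝ w q ≤ inner ℝ w s}
              = (⋂ z ∈ D, {w | inner ℝ w z ≤ inner ℝ w y}) ∩
                ⋃ s ∈ T, {w | inner ℝ w q ≤ inner ℝ w s} := by
            ext w
            simp [faceIn, hyD]
          change IsClosed {w : EuclideanSpace ℝ ι | y ∈ faceIn D w ∧ ∃ s ∈ T, inner ℝ w q ≤ inner ℝ w s}
          rw [e]
          refine IsClosed.inter ?_ ?_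
          · exact isClosed_biInter fun z _ => isClosed_le (by fun_prop) (by fun_prop)
          · exact T.finite_toSet.isClosed_biUnion fun z _ =>
              isClosed_le (by fun_prop) (by fun_prop) }
    have hC : ∀ w, w ∈ C ↔ (y ∈ faceIn D w ∧ ∃ s ∈ T, inner ℝ w q ≤ inner ℝ w s) :=
      fun w => Iff.rfl
    by_cases huC : u ∈ C
    · exact ((hC u).1 huC).2
    exfalso
    obtain ⟨w, hw, hwu⟩ := C.hyperplane_separation' huC
    have hyk := (hD y).1 hyD
    have step : ∀ k, ∀ᶠ t : ℝ in nhdsWithin 0 (Set.Ioi 0), inner ℝ (a k) (y - t • w) ≤ r k := by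
      intro k
      by_cases hk : inner ℝ (a k) y = r k
      · have hmem : a k ∈ C := by
          refine (hC _).2 ⟨⟨hyD, fun z hz => hk ▸ (hD z).1 hz k⟩, ?_⟩
          obtain ⟨x, hx, hxq⟩ := hq k
          obtain ⟨s, hs, hsf⟩ := hmax (a k)
          exact ⟨s, hs, hxq.trans (hsf.2 x hx)⟩
        have h0 := hw _ hmem
        filter_upwards [self_mem_nhdsWithin] with t ht
        rw [inner_sub_right, real_inner_smul_right, hk]
        have := mul_nonneg (le_of_lt (Set.mem_Ioi.1 ht)) h0
        linarith
      · have hlt : inner ℝ (a k) y < r k := lt_of_le_of_ne (hyk k) hk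
        have hcont : Filter.Tendsto (fun t : ℝ => inner ℝ (a k) (y - t • w)) (nhds 0)
            (nhds (inner ℝ (a k) y)) := by
          have : Continuous (fun t : ℝ => inner ℝ (a k) (y - t • w)) := by fun_prop
          simpa using this.tendsto 0
        exact nhdsWithin_le_nhds ((hcont.eventually_lt_const hlt).mono fun _ h => h.le)
    obtain ⟨t, ht, htpos⟩ := ((Filter.eventually_all.2 step).and self_mem_nhdsWithin).exists
    have hin : y - t • w ∈ D := (hD _).2 ht
    have := hy hin
    simp only [Set.mem_ofPred_eq, inner_sub_right, real_inner_smul_right] at this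
    have := mul_neg_of_pos_of_neg (Set.mem_Ioi.1 htpos) hwu
    linarith
  by_contra hqP
  have hcl : IsClosed P := by
    rw [hP]; exact (T.finite_toSet.isCompact_convexHull ℝ).isClosed
  have hcv : Convex ℝ P := by rw [hP]; exact convex_convexHull ℝ _
  obtain ⟨f, c, hf, hfq⟩ := geometric_hahn_banach_closed_point hcv hcl hqP
  obtain ⟨s, hs, h⟩ := main ((InnerProductSpace.toDual ℝ _).symm f)
  simp only [InnerProductSpace.toDual_symm_apply] at h
  have := hf s (hTP s hs)
  linarith

end Abstract

section GZ

/-- Coordinates, extended by zero. -/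
def gzX {n : ℕ} {R : Type*} [Zero R] (x : GZIdx n → R) (i j : ℕ) : R :=
  if h : 1 ≤ i ∧ 1 ≤ j ∧ i + j ≤ n then x (gzIdx n i j h.1 h.2.1 h.2.2) else 0

/-- Coordinate vectors, extended by zero. -/
noncomputable def gzE (n i j : ℕ) : EuclideanSpace ℝ (GZIdx n) :=
  if h : 1 ≤ i ∧ 1 ≤ j ∧ i + j ≤ n then EuclideanSpace.single (gzIdx n i j h.1 h.2.1 h.2.2) 1 else 0

theorem inner_gzE {n : ℕ} (i j : ℕ) (x : EuclideanSpace ℝ (GZIdx n)) :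
    inner ℝ (gzE n i j) x = gzX x.ofLp i j := by
  unfold gzE gzX
  split_ifs <;> simp [EuclideanSpace.inner_single_left]

/-- Normals of left facets. -/
noncomputable def gzL (n i j : ℕ) : EuclideanSpace ℝ (GZIdx n) := gzE n (i - 1) j - gzE n i j
/-- Normals of right facets. -/
noncomputable def gzR (n i j : ℕ) : EuclideanSpace ℝ (GZIdx n) :=
  gzE n i j - gzE n (i - 1) (j + 1)

theorem inner_gzL {n : ℕ} (i j : ℕ) (x : EuclideanSpace ℝ (GZIdx n)) :
    inner ℝ (gzL n i j) x = gzX x.ofLp (i - 1) j - gzX x.ofLp i j := by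
  simp [gzL, inner_sub_left, inner_gzE]

theorem inner_gzR {n : ℕ} (i j : ℕ) (x : EuclideanSpace ℝ (GZIdx n)) :
    inner ℝ (gzR n i j) x = gzX x.ofLp i j - gzX x.ofLp (i - 1) (j + 1) := by
  simp [gzR, inner_sub_left, inner_gzE]

theorem gzX_zero {n : ℕ} {R : Type*} [Zero R] (x : GZIdx n → R) (j : ℕ) : gzX x 0 j = 0 := by
  simp [gzX]

theorem gzX_of {n : ℕ} {R : Type*} [Zero R] (x : GZIdx n → R) (i j : ℕ) (hi : 1 ≤ i)
    (hj : 1 ≤ j) (h : i + j ≤ n) : gzX x i j = x (gzIdx n i j hi hj h) := by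
  simp [gzX, hi, hj, h]

theorem mem_gz {n : ℕ} (lam : ℕ → ℝ) (x : EuclideanSpace ℝ (GZIdx n)) :
    x ∈ gzPolytope n (fun i => lam i.val) ↔ ∀ i j, 1 ≤ i → 1 ≤ j → i + j ≤ n →
      inner ℝ (gzL n i j) x ≤ (if i = 1 then -lam (j - 1) else 0) ∧
      inner ℝ (gzR n i j) x ≤ (if i = 1 then lam j else 0) := by
  simp only [inner_gzL, inner_gzR]
  constructor
  · rintro ⟨h1, h2⟩ i j hi hj hij
    by_cases h : i = 1
    · subst h
      have := h1 j hj (by omega)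
      simp only [Nat.sub_self, gzX_zero, if_true, gzX_of x.ofLp 1 j hi hj hij]
      constructor <;> linarith
    · have := h2 i j (by omega) hj hij
      simp only [h, if_false, gzX_of x.ofLp i j hi hj hij,
        gzX_of x.ofLp (i-1) j (by omega) hj (by omega),
        gzX_of x.ofLp (i-1) (j+1) (by omega) (by omega) (by omega)]
      constructor <;> linarith
  · intro H
    constructor
    · intro j hj hjn
      have := H 1 j le_rfl hj (by omega)
      simp only [Nat.sub_self, gzX_zero, if_true, gzX_of x.ofLp 1 j le_rfl hj (by omega)] at this
      constructor <;> linarith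
    · intro i j hi hj hij
      have := H i j (by omega) hj hij
      have h : i ≠ 1 := by omega
      simp only [h, if_false, gzX_of x.ofLp i j (by omega) hj hij,
        gzX_of x.ofLp (i-1) j (by omega) hj (by omega),
        gzX_of x.ofLp (i-1) (j+1) (by omega) (by omega) (by omega)] at this
      constructor <;> linarith

/-- Vector from a function of two naturals. -/
noncomputable def gzV (n : ℕ) (f : ℕ → ℕ → ℝ) : EuclideanSpace ℝ (GZIdx n) :=
  WithLp.toLp 2 (fun p => f p.1.1.val p.1.2.val)

theorem gzX_gzV {n : ℕ} (f : ℕ → ℕ → ℝ) (i j : ℕ) (hi : 1 ≤ i)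
    (hj : 1 ≤ j) (h : i + j ≤ n) : gzX (gzV n f).ofLp i j = f i j := by
  rw [gzX_of _ i j hi hj h]; rfl

/-- The test points of the standard polytope. -/
noncomputable def gzPt (n m : ℕ) : EuclideanSpace ℝ (GZIdx n) :=
  gzV n (fun k l => ((max l (min m (k + l)) : ℕ) : ℝ))

theorem gzPt_L {n : ℕ} (m i j : ℕ) (hi : 1 ≤ i) (hj : 1 ≤ j) (h : i + j ≤ n) :
    inner ℝ (gzL n i j) (gzPt n m) - (if i = 1 then -((( j - 1 : ℕ) : ℝ) + 1) else 0) =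
      ((max j (min m (i - 1 + j)) : ℕ) : ℝ) - ((max j (min m (i + j)) : ℕ) : ℝ) := by
  rw [inner_gzL, gzPt, gzX_gzV _ i j hi hj h]
  by_cases h1 : i = 1
  · subst h1
    have : max j (min m (1 - 1 + j)) = j := by omega
    rw [this, gzX_zero, if_pos rfl, Nat.cast_sub hj]
    push_cast; ring
  · rw [gzX_gzV _ (i-1) j (by omega) hj (by omega), if_neg h1, sub_zero]

theorem gzPt_R {n : ℕ} (m i j : ℕ) (hi : 1 ≤ i) (hj : 1 ≤ j) (h : i + j ≤ n) :
    inner ℝ (gzR n i j) (gzPt n m) - (if i = 1 then (j : ℝ) + 1 else 0) =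
      ((max j (min m (i + j)) : ℕ) : ℝ) - ((max (j + 1) (min m (i + j)) : ℕ) : ℝ) := by
  rw [inner_gzR, gzPt, gzX_gzV _ i j hi hj h]
  by_cases h1 : i = 1
  · subst h1
    have : max (j + 1) (min m (1 + j)) = j + 1 := by omega
    rw [this, gzX_zero, if_pos rfl]
    push_cast; ring
  · rw [gzX_gzV _ (i-1) (j+1) (by omega) (by omega) (by omega), if_neg h1, sub_zero]
    congr 4; omega

/-- The standard polytope. -/
noncomputable abbrev gzD (n : ℕ) : Set (EuclideanSpace ℝ (GZIdx n)) :=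
  gzPolytope n (fun i => (i.val + 1 : ℝ))

theorem mem_gzD {n : ℕ} (x : EuclideanSpace ℝ (GZIdx n)) :
    x ∈ gzD n ↔ ∀ i j, 1 ≤ i → 1 ≤ j → i + j ≤ n →
      inner ℝ (gzL n i j) x ≤ (if i = 1 then -(((j - 1 : ℕ) : ℝ) + 1) else 0) ∧
      inner ℝ (gzR n i j) x ≤ (if i = 1 then (j : ℝ) + 1 else 0) :=
  mem_gz (fun k => (k : ℝ) + 1) x

theorem gzPt_mem (n m : ℕ) : gzPt n m ∈ gzD n := by
  rw [mem_gzD]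
  intro i j hi hj h
  have h1 := gzPt_L m i j hi hj h
  have h2 := gzPt_R m i j hi hj h
  have h3 : ((max j (min m (i - 1 + j)) : ℕ) : ℝ) ≤ ((max j (min m (i + j)) : ℕ) : ℝ) := by
    exact_mod_cast (by omega : max j (min m (i - 1 + j)) ≤ max j (min m (i + j)))
  have h4 : ((max j (min m (i + j)) : ℕ) : ℝ) ≤ ((max (j + 1) (min m (i + j)) : ℕ) : ℝ) := by
    exact_mod_cast (by omega : max j (min m (i + j)) ≤ max (j + 1) (min m (i + j)))
  constructor <;> linarith

theorem gzPt_face_L {n : ℕ} (m i j : ℕ) (hi : 1 ≤ i) (hj : 1 ≤ j) (h : i + j ≤ n)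
    (hm : max j (min m (i - 1 + j)) = max j (min m (i + j))) :
    gzPt n m ∈ faceIn (gzD n) (gzL n i j) := by
  refine ⟨gzPt_mem n m, fun z hz => ?_⟩
  have h1 := gzPt_L m i j hi hj h
  rw [hm, sub_self] at h1
  have := (((mem_gzD z).1 hz) i j hi hj h).1
  linarith

theorem gzPt_face_R {n : ℕ} (m i j : ℕ) (hi : 1 ≤ i) (hj : 1 ≤ j) (h : i + j ≤ n)
    (hm : max j (min m (i + j)) = max (j + 1) (min m (i + j))) :
    gzPt n m ∈ faceIn (gzD n) (gzR n i j) := by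
  refine ⟨gzPt_mem n m, fun z hz => ?_⟩
  have h1 := gzPt_R m i j hi hj h
  rw [hm, sub_self] at h1
  have := (((mem_gzD z).1 hz) i j hi hj h).2
  linarith

theorem gzD_bounds {n : ℕ} (x : EuclideanSpace ℝ (GZIdx n)) (hx : x ∈ gzD n) (i : ℕ) :
    ∀ j, 1 ≤ i → 1 ≤ j → i + j ≤ n → 0 ≤ gzX x.ofLp i j ∧ gzX x.ofLp i j ≤ i + j := by
  rw [mem_gzD] at hx
  simp only [inner_gzL, inner_gzR] at hx
  induction i with
  | zero => intro j h; omega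
  | succ i ih =>
    intro j _ hj hij
    have h := hx (i + 1) j (by omega) hj hij
    by_cases h0 : i = 0
    · subst h0
      simp only [Nat.zero_add, Nat.sub_self, gzX_zero, if_true] at h ⊢
      have : (0 : ℝ) ≤ ((j - 1 : ℕ) : ℝ) := Nat.cast_nonneg _
      push_cast
      constructor <;> linarith
    · have h1 := ih j (by omega) hj (by omega)
      have h2 := ih (j + 1) (by omega) (by omega) (by omega)
      have h3 : i + 1 ≠ 1 := by omega
      simp only [h3, if_false, Nat.add_sub_cancel] at h
      push_cast at h2 ⊢
      constructor <;> linarith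

theorem gzD_compact (n : ℕ) : IsCompact (gzD n) := by
  have hcl : IsClosed (gzD n) := by
    have e : gzD n = ⋂ (i : ℕ) (j : ℕ) (_ : 1 ≤ i) (_ : 1 ≤ j) (_ : i + j ≤ n),
      ({x | inner ℝ (gzL n i j) x ≤ (if i = 1 then -(((j - 1 : ℕ) : ℝ) + 1) else 0)} ∩
      {x | inner ℝ (gzR n i j) x ≤ (if i = 1 then (j : ℝ) + 1 else 0)}) := by
      ext x
      rw [mem_gzD]
      simp only [Set.mem_iInter, Set.mem_inter_iff, Set.mem_ofPred_eq]
    rw [e]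
    refine isClosed_iInter fun i => isClosed_iInter fun j => isClosed_iInter fun _ =>
      isClosed_iInter fun _ => isClosed_iInter fun _ => IsClosed.inter ?_ ?_ <;>
    exact isClosed_le (by fun_prop) (by fun_prop)
  have hK : IsCompact (WithLp.toLp 2 '' (Set.Icc (fun _ => 0) (fun _ => (n : ℝ)) :
      Set (GZIdx n → ℝ)) : Set (EuclideanSpace ℝ (GZIdx n))) :=
    isCompact_Icc.image (PiLp.continuous_toLp 2 _)
  refine hK.of_isClosed_subset hcl fun x hx => ⟨x.ofLp, ?_, rfl⟩
  have hb : ∀ p : GZIdx n, 0 ≤ x.ofLp p ∧ x.ofLp p ≤ n := by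
    rintro ⟨⟨⟨i, hi⟩, ⟨j, hj⟩⟩, h1, h2, h3⟩
    have := gzD_bounds x hx i j h1 h2 h3
    rw [gzX_of _ i j h1 h2 h3] at this
    have h4 : (i : ℝ) + j ≤ n := by exact_mod_cast h3
    exact ⟨this.1, this.2.trans h4⟩
  exact ⟨fun p => (hb p).1, fun p => (hb p).2⟩

end GZ

/-- Any *lattice* polytope normally equivalent to the Gelfand–Zetlin polytope of the
regular dominant weight `μ = (1, 2, …, n)` is an integral translate of the
Gelfand–Zetlin polytope of some dominant integer weight `λ`. -/
theorem lattice_polytope_with_gz_normal_fan_is_translate_of_gz (n : ℕ) (hn : 2 ≤ n)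
    (P : Set (EuclideanSpace ℝ (GZIdx n)))
    (S : Finset (GZIdx n → ℤ)) (hS : S.Nonempty)
    (hP : P = convexHull ℝ
      ((fun f : GZIdx n → ℤ => (WithLp.toLp 2 (fun p => (f p : ℝ)) : EuclideanSpace ℝ (GZIdx n))) '' S))
    (hne : ∀ u v : EuclideanSpace ℝ (GZIdx n),
      faceIn P u = faceIn P v ↔
      faceIn (gzPolytope n (fun i => (i.val + 1 : ℝ))) u =
        faceIn (gzPolytope n (fun i => (i.val + 1 : ℝ))) v) :
    ∃ lam : Fin n → ℤ, Monotone lam ∧ ∃ c : GZIdx n → ℤ,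
      P = (fun x => (WithLp.toLp 2 (fun p => (c p : ℝ)) : EuclideanSpace ℝ (GZIdx n)) + x) ''
            gzPolytope n (fun i => (lam i : ℝ)) := by
  classical
  let cast : (GZIdx n → ℤ) → EuclideanSpace ℝ (GZIdx n) :=
    fun f => WithLp.toLp 2 (fun p => (f p : ℝ))
  have hcast : ∀ f i j, gzX (cast f).ofLp i j = ((gzX f i j : ℤ) : ℝ) := by
    intro f i j
    unfold gzX
    split_ifs <;> simp [cast]
  let T : Finset (EuclideanSpace ℝ (GZIdx n)) := S.image cast
  have hT : T.Nonempty := hS.image _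
  have hPT : P = convexHull ℝ (T : Set (EuclideanSpace ℝ (GZIdx n))) := by
    rw [hP]; congr 1; simp [T, cast]
  have hmax : ∀ u, ∃ f : GZIdx n → ℤ, cast f ∈ faceIn P u := by
    intro u
    obtain ⟨s, hs, h⟩ := exists_max_pt T hT u
    obtain ⟨f, _, rfl⟩ := Finset.mem_image.1 hs
    exact ⟨f, hPT ▸ h⟩
  have hne' : ∀ u v, faceIn P u = faceIn P v ↔ faceIn (gzD n) u = faceIn (gzD n) v := hne
  -- the integral vertex on all left facets
  obtain ⟨c, hc⟩ : ∃ c : GZIdx n → ℤ, ∀ i j, 1 ≤ i → 1 ≤ j → i + j ≤ n →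
      cast c ∈ faceIn P (gzL n i j) := by
    obtain ⟨c, hc⟩ := hmax (∑ p : GZIdx n, gzL n p.1.1.val p.1.2.val)
    refine ⟨c, fun i j hi hj hij => ?_⟩
    exact face_sum Finset.univ P (gzD n) hne' (fun p : GZIdx n => gzL n p.1.1.val p.1.2.val)
      (gzPt_mem n 0)
      (fun p _ => gzPt_face_L 0 _ _ p.2.1 p.2.2.1 p.2.2.2 (by omega)) (cast c) hc
      (gzIdx n i j hi hj hij) (Finset.mem_univ _)
  have hcP : cast c ∈ P := (hc 1 1 le_rfl le_rfl hn).1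
  choose g hg using fun i j => hmax (gzR n i j)
  -- right-hand sides
  let b : ℕ → ℕ → ℝ := fun i j => inner ℝ (gzR n i j) (cast (g i j)) - inner ℝ (gzR n i j) (cast c)
  have hbs : ∀ i j, 1 ≤ i → 1 ≤ j → i + 1 + j ≤ n → b (i + 1) j = b i j := by
    intro i j hi hj hij
    have e : gzR n i j + gzL n i (j + 1) = gzL n (i + 1) j + gzR n (i + 1) j := by
      simp only [gzR, gzL, Nat.add_sub_cancel]; abel
    obtain ⟨s, hs⟩ := hmax (gzR n i j + gzL n i (j + 1))
    have f1 := face_add P (gzD n) hne' _ _ (gzPt n (i + j))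
      (gzPt_face_R _ i j hi hj (by omega) (by omega))
      (gzPt_face_L _ i (j + 1) hi (by omega) (by omega) (by omega)) _ hs
    rw [e] at hs
    have f2 := face_add P (gzD n) hne' _ _ (gzPt n (i + j))
      (gzPt_face_L _ (i + 1) j (by omega) hj (by omega) (by omega))
      (gzPt_face_R _ (i + 1) j (by omega) hj (by omega) (by omega)) _ hs
    have eqf : ∀ {u x y : EuclideanSpace ℝ (GZIdx n)}, x ∈ faceIn P u → y ∈ faceIn P u →
        inner ℝ u x = inner ℝ u y := fun hx hy => le_antisymm (hy.2 _ hx.1) (hx.2 _ hy.1)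
    have a1 := eqf f1.1 (hg i j)
    have a2 := eqf f1.2 (hc i (j + 1) hi (by omega) (by omega))
    have a3 := eqf f2.1 (hc (i + 1) j (by omega) hj hij)
    have a4 := eqf f2.2 (hg (i + 1) j)
    have a5 := congrArg (fun u => inner ℝ u (cast s)) e
    have a6 := congrArg (fun u => inner ℝ u (cast c)) e
    simp only [inner_add_left] at a5 a6
    simp only [b]
    linarith
  have hb1 : ∀ i j, 1 ≤ i → 1 ≤ j → i + j ≤ n → b i j = b 1 j := by
    intro i j hi hj
    induction i, hi using Nat.le_induction with
    | base => intro _; rfl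
    | succ i hi ih => intro h; rw [hbs i j hi hj h, ih (by omega)]
  let B : ℕ → ℤ := fun j =>
    (gzX (g 1 j) 1 j - gzX (g 1 j) 0 (j + 1)) - (gzX c 1 j - gzX c 0 (j + 1))
  have hB : ∀ j, (B j : ℝ) = b 1 j := by
    intro j
    simp only [B, b, inner_gzR, hcast]
    push_cast
    simp
  have hB0 : ∀ j, 0 ≤ B j := by
    intro j
    have : (0 : ℝ) ≤ B j := by
      rw [hB]; exact sub_nonneg.2 ((hg 1 j).2 _ hcP)
    exact_mod_cast this
  -- facet description of `P`
  have hfac : ∀ x, x ∈ P ↔ ∀ i j, 1 ≤ i → 1 ≤ j → i + j ≤ n →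
      inner ℝ (gzL n i j) x ≤ inner ℝ (gzL n i j) (cast c) ∧
      inner ℝ (gzR n i j) x ≤ inner ℝ (gzR n i j) (cast c) + B j := by
    intro x
    constructor
    · intro hx i j hi hj hij
      refine ⟨(hc i j hi hj hij).2 x hx, ?_⟩
      have := (hg i j).2 x hx
      rw [hB, ← hb1 i j hi hj hij]
      simp only [b]; linarith
    · intro H
      refine mem_of_facets (κ := GZIdx n × Bool) T hT P (gzD n) hPT hne'
        (fun k => if k.2 then gzR n k.1.1.1.val k.1.1.2.val else gzL n k.1.1.1.val k.1.1.2.val)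
        (fun k => if k.2 then (if k.1.1.1.val = 1 then (k.1.1.2.val : ℝ) + 1 else 0) else
          (if k.1.1.1.val = 1 then -(((k.1.1.2.val - 1 : ℕ) : ℝ) + 1) else 0))
        ?_ (gzD_compact n) ⟨_, gzPt_mem n 0⟩ x ?_
      · intro y
        rw [mem_gzD]
        constructor
        · rintro h ⟨p, _ | _⟩
          · simpa using (h _ _ p.2.1 p.2.2.1 p.2.2.2).1
          · simpa using (h _ _ p.2.1 p.2.2.1 p.2.2.2).2
        · intro h i j hi hj hij
          exact ⟨h (gzIdx n i j hi hj hij, false), h (gzIdx n i j hi hj hij, true)⟩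
      · rintro ⟨p, _ | _⟩
        · exact ⟨cast c, hcP, by simpa using (H _ _ p.2.1 p.2.2.1 p.2.2.2).1⟩
        · refine ⟨cast (g p.1.1.val p.1.2.val), (hg _ _).1, ?_⟩
          have := (H _ _ p.2.1 p.2.2.1 p.2.2.2).2
          rw [hB, ← hb1 _ _ p.2.1 p.2.2.1 p.2.2.2] at this
          simp only [b] at this
          simp only [if_true]
          linarith
  let Λ : ℕ → ℤ := fun m => ∑ k ∈ Finset.range m, B (k + 1)
  have hΛ : ∀ j, 1 ≤ j → Λ j = Λ (j - 1) + B j := by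
    intro j hj
    obtain ⟨k, rfl⟩ : ∃ k, j = k + 1 := ⟨j - 1, by omega⟩
    simp [Λ, Finset.sum_range_succ]
  have hmono : Monotone Λ := monotone_nat_of_le_succ fun m => by
    have := hΛ (m + 1) (by omega)
    have := hB0 (m + 1)
    simp only [Nat.add_sub_cancel] at *
    omega
  let c' : GZIdx n → ℤ := fun p => c p - Λ (p.1.2.val - 1)
  have hc' : ∀ (z : EuclideanSpace ℝ (GZIdx n)) i j, 1 ≤ i → 1 ≤ j → i + j ≤ n →
      gzX (cast c' + z).ofLp i j
        = gzX (cast c).ofLp i j + gzX z.ofLp i j - Λ (j - 1) := by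
    intro z i j hi hj hij
    simp only [gzX_of _ i j hi hj hij]
    simp [cast, c', gzIdx]
    ring
  refine ⟨fun i => Λ i.val, fun i j h => hmono h, c', ?_⟩
  have hkey : ∀ z, cast c' + z ∈ P ↔ z ∈ gzPolytope n (fun i => ((Λ i.val : ℤ) : ℝ)) := by
    intro z
    rw [hfac, mem_gz (fun m => ((Λ m : ℤ) : ℝ))]
    refine forall_congr' fun i => forall_congr' fun j => forall_congr' fun hi =>
      forall_congr' fun hj => forall_congr' fun hij => ?_
    simp only [inner_gzL, inner_gzR]
    have hL : (Λ j : ℝ) = Λ (j - 1) + B j := by exact_mod_cast hΛ j hj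
    rw [hc' z i j hi hj hij]
    by_cases h1 : i = 1
    · subst h1
      simp only [Nat.sub_self, gzX_zero, if_true]
      constructor <;> rintro ⟨h1, h2⟩ <;> constructor <;> linarith
    · rw [hc' z (i - 1) j (by omega) hj (by omega),
        hc' z (i - 1) (j + 1) (by omega) (by omega) (by omega)]
      simp only [h1, if_false, Nat.add_sub_cancel]
      constructor <;> rintro ⟨h1, h2⟩ <;> constructor <;> linarith
  ext x
  constructor
  · intro hx
    refine ⟨x - cast c', (hkey _).1 (by simpa using hx), ?_⟩
    change cast c' + (x - cast c') = x
    abel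
  · rintro ⟨z, hz, rfl⟩
    exact (hkey z).2 hz
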